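/- Let π be a probability measure on [0,1]^p, let C₀* > 0, and let f, f₀ : [0,1]^p → ℝ be measurable functions with ‖f‖_∞ ≤ C₀* and ‖f₀‖_∞ ≤ C₀*. Then for every j ∈ {1,…,p}, the generalized total-effect Sobol' indices satisfy |T_{j,π}(f) − T_{j,π}(f₀)| ≤ 4C₀* · (Σ_{i=0}^{p−1} C(p−1, i)(2^{i+1} − 1)) · ‖f − f₀‖_{L²(π)}, where C(p−1, i) is the binomial coefficient. -/

import Mathlib

/-
Möbius inversion telescopes the sum defining the total effect to
`T_j(g) = c_{[p]}(g) - c_{[p] \ {j}}(g)`. Since `c_P(g) = Var(E[g(X) | X_P])`, the law of total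
variance turns this into `E[Var(g(X) | X_{-j})] = ‖g - E[g | X_{-j}]‖²`, the square of a seminorm
dominated by `‖·‖_{L²(π)}`. From `a² - b² = (a + b) (a - b)` it follows that
`|T_j(f) - T_j(f₀)| ≤ (‖f‖ + ‖f₀‖) ‖f - f₀‖ ≤ 2 C₀ ‖f - f₀‖`. The constant of the theorem is larger:
the `i = 0` term of its binomial sum is already `1`.
-/

open MeasureTheory Finset

/-- The unit hypercube `[0,1]^p`. -/
abbrev UnitCube (p : ℕ) := Fin p → Set.Icc (0 : ℝ) 1

/-- The sub-σ-algebra of `[0,1]^p` generated by the projection onto the coordinates in `P`. -/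
def coordSubAlg (p : ℕ) (P : Finset (Fin p)) : MeasurableSpace (UnitCube p) :=
  MeasurableSpace.comap (fun x (i : P) => x i) MeasurableSpace.pi

/-- The cost functional `c_{P,π}(g) = E[(E[g(X) | X_P])²] - (E[g(X)])²` for `X ∼ π`,
with `c_{∅,π}(g) := 0`. -/
noncomputable def cost {p : ℕ} (π : Measure (UnitCube p)) (P : Finset (Fin p))
    (g : UnitCube p → ℝ) : ℝ :=
  if P = ∅ then 0 else
    (∫ x, ((π[g | coordSubAlg p P]) x) ^ 2 ∂π) - (∫ x, g x ∂π) ^ 2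

/-- The generalized main-effect Sobol' index, via Möbius inversion:
`V_{P,π}(g) = ∑_{Q ⊆ P} (-1)^{|P| - |Q|} c_{Q,π}(g)`
(equivalent to the recursive definition `V_{P,π}(g) = c_{P,π}(g) - ∑_{Q ⊊ P} V_{Q,π}(g)`,
`V_{∅,π}(g) = 0`). -/
noncomputable def sobolV {p : ℕ} (π : Measure (UnitCube p)) (P : Finset (Fin p))
    (g : UnitCube p → ℝ) : ℝ :=
  ∑ Q ∈ P.powerset, (-1 : ℝ) ^ (P.card - Q.card) * cost π Q g

/-- The `j`-th generalized total-effect Sobol' index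
`T_{j,π}(g) = ∑_{P ⊆ [p]\{j}} V_{P∪{j},π}(g)`. -/
noncomputable def sobolT {p : ℕ} (π : Measure (UnitCube p)) (j : Fin p)
    (g : UnitCube p → ℝ) : ℝ :=
  ∑ P ∈ (Finset.univ.erase j).powerset, sobolV π (insert j P) g

section PowersetMoebius

variable {α R : Type*} [Ring R]

/-- The Möbius transform of a set function `F` on the lattice of finite subsets. The sets `Q` range
over subsets of `S`, so the exponent is not truncated. -/
def powersetMoebius (F : Finset α → R) (S : Finset α) : R :=
  ∑ Q ∈ S.powerset, (-1) ^ (#S - #Q) * F Q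

variable {a : α} {S : Finset α}

lemma powersetMoebius_insert [DecidableEq α] (F : Finset α → R) (ha : a ∉ S) :
    powersetMoebius F (insert a S) =
      powersetMoebius (fun Q ↦ F (insert a Q)) S - powersetMoebius F S := by
  unfold powersetMoebius
  rw [sum_powerset_insert ha, card_insert_of_notMem ha, add_comm, sub_eq_add_neg,
    ← sum_neg_distrib]
  congr 1 <;> refine sum_congr rfl fun Q hQ ↦ ?_
  · rw [card_insert_of_notMem (notMem_mono (mem_powerset.1 hQ) ha), Nat.add_sub_add_right]
  · rw [Nat.sub_add_comm (card_le_card (mem_powerset.1 hQ)), pow_succ, mul_neg_one, neg_mul]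

lemma sum_powerset_powersetMoebius (F : Finset α → R) (S : Finset α) :
    ∑ P ∈ S.powerset, powersetMoebius F P = F S := by
  classical
  induction S using Finset.induction_on generalizing F with
  | empty => simp [powersetMoebius]
  | insert a S ha ih =>
    have h_insert : ∀ P ∈ S.powerset, powersetMoebius F (insert a P) =
        powersetMoebius (fun Q ↦ F (insert a Q)) P - powersetMoebius F P := fun P hP ↦
      powersetMoebius_insert F (notMem_mono (mem_powerset.1 hP) ha)
    rw [sum_powerset_insert ha, sum_congr rfl h_insert, sum_sub_distrib, ih, ih,
      add_sub_cancel]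

lemma sum_powerset_powersetMoebius_insert [DecidableEq α] (F : Finset α → R) (ha : a ∉ S) :
    ∑ P ∈ S.powerset, powersetMoebius F (insert a P) = F (insert a S) - F S := by
  rw [eq_sub_iff_add_eq', ← sum_powerset_powersetMoebius F (insert a S), sum_powerset_insert ha,
    sum_powerset_powersetMoebius]

end PowersetMoebius

section CondVar

open ProbabilityTheory

variable {Ω : Type*} {m m₀ : MeasurableSpace Ω} {μ : Measure Ω} {f g : Ω → ℝ}

lemma lpNorm_congr_ae {E : Type*} [NormedAddCommGroup E] {f g : Ω → E} {q : ENNReal}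
    (h : f =ᵐ[μ] g) : lpNorm f q μ = lpNorm g q μ := by
  rw [lpNorm, lpNorm, eLpNorm_congr_ae h]
  congr 1
  exact propext (aestronglyMeasurable_congr h)

lemma lpNorm_two_eq_sqrt_integral_sq (hf : AEStronglyMeasurable f μ) :
    lpNorm f 2 μ = √(∫ x, f x ^ 2 ∂μ) := by
  simp [lpNorm_eq_integral_norm_rpow_toReal two_ne_zero ENNReal.ofNat_ne_top hf,
    Real.sqrt_eq_rpow]

lemma sq_lpNorm_two (hf : AEStronglyMeasurable f μ) :
    lpNorm f 2 μ ^ 2 = ∫ x, f x ^ 2 ∂μ := by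
  rw [lpNorm_two_eq_sqrt_integral_sq hf, Real.sq_sqrt (integral_nonneg fun x ↦ sq_nonneg (f x))]

lemma sqrt_integral_abs_sq_le [IsProbabilityMeasure μ] {C : ℝ} (hC : 0 ≤ C)
    (hf : ∀ x, |f x| ≤ C) : √(∫ x, |f x| ^ 2 ∂μ) ≤ C := by
  have h_integral : ∫ x, |f x| ^ 2 ∂μ ≤ ∫ _, C ^ 2 ∂μ :=
    integral_mono_of_nonneg (.of_forall fun x ↦ by positivity) (integrable_const _)
      (.of_forall fun x ↦ pow_le_pow_left₀ (abs_nonneg _) (hf x) 2)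
  exact Real.sqrt_le_iff.2 ⟨hC, by simpa using h_integral⟩

variable [IsFiniteMeasure μ]

lemma integral_condVar_eq_sq_lpNorm (hm : m ≤ m₀) (hf : MemLp f 2 μ) :
    ∫ x, (Var[f; μ | m]) x ∂μ = lpNorm (f - μ[f | m]) 2 μ ^ 2 := by
  rw [sq_lpNorm_two (hf.sub (hf.condExp one_le_two)).aestronglyMeasurable]
  exact integral_condExp hm

lemma lpNorm_sub_condExp_le (hm : m ≤ m₀) (hf : MemLp f 2 μ) :
    lpNorm (f - μ[f | m]) 2 μ ≤ lpNorm f 2 μ := by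
  refine le_of_sq_le_sq ?_ lpNorm_nonneg
  calc lpNorm (f - μ[f | m]) 2 μ ^ 2 = ∫ x, (Var[f; μ | m]) x ∂μ :=
        (integral_condVar_eq_sq_lpNorm hm hf).symm
    _ ≤ ∫ x, (μ[f ^ 2 | m]) x ∂μ :=
        integral_mono_ae integrable_condVar integrable_condExp (condVar_ae_le_condExp_sq hm hf)
    _ = ∫ x, f x ^ 2 ∂μ := integral_condExp hm
    _ = lpNorm f 2 μ ^ 2 := (sq_lpNorm_two hf.aestronglyMeasurable).symm

lemma lpNorm_sub_condExp_sub_lpNorm_sub_condExp_le (hm : m ≤ m₀) (hf : MemLp f 2 μ)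
    (hg : MemLp g 2 μ) :
    lpNorm (f - μ[f | m]) 2 μ - lpNorm (g - μ[g | m]) 2 μ ≤ lpNorm (f - g) 2 μ := by
  have h_linear : (f - μ[f | m]) - (g - μ[g | m]) =ᵐ[μ] (f - g) - μ[f - g | m] := by
    filter_upwards [condExp_sub (hf.integrable one_le_two) (hg.integrable one_le_two) m] with x hx
    simp only [Pi.sub_apply] at hx ⊢
    rw [hx, sub_sub_sub_comm]
  calc lpNorm (f - μ[f | m]) 2 μ - lpNorm (g - μ[g | m]) 2 μ
      ≤ lpNorm ((f - μ[f | m]) - (g - μ[g | m])) 2 μ :=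
        sub_le_iff_le_add'.2 <|
          lpNorm_le_lpNorm_add_lpNorm_sub' (hg.sub (hg.condExp one_le_two)) one_le_two
    _ = lpNorm ((f - g) - μ[f - g | m]) 2 μ := lpNorm_congr_ae h_linear
    _ ≤ lpNorm (f - g) 2 μ := lpNorm_sub_condExp_le hm (hf.sub hg)

lemma abs_integral_condVar_sub_le (hm : m ≤ m₀) (hf : MemLp f 2 μ) (hg : MemLp g 2 μ) :
    |∫ x, (Var[f; μ | m]) x ∂μ - ∫ x, (Var[g; μ | m]) x ∂μ| ≤
      (lpNorm f 2 μ + lpNorm g 2 μ) * lpNorm (f - g) 2 μ := by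
  rw [integral_condVar_eq_sq_lpNorm hm hf, integral_condVar_eq_sq_lpNorm hm hg, sq_sub_sq, abs_mul,
    abs_of_nonneg (add_nonneg lpNorm_nonneg lpNorm_nonneg)]
  gcongr
  · exact add_nonneg lpNorm_nonneg lpNorm_nonneg
  · exact lpNorm_sub_condExp_le hm hf
  · exact lpNorm_sub_condExp_le hm hg
  · refine abs_sub_le_iff.2 ⟨lpNorm_sub_condExp_sub_lpNorm_sub_condExp_le hm hf hg, ?_⟩
    rw [lpNorm_sub_comm f g]
    exact lpNorm_sub_condExp_sub_lpNorm_sub_condExp_le hm hg hf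

end CondVar

section Sobol

open ProbabilityTheory

variable {p : ℕ} {π : Measure (UnitCube p)} {g : UnitCube p → ℝ}

lemma sobolT_eq_cost_sub_cost (π : Measure (UnitCube p)) (g : UnitCube p → ℝ) (j : Fin p) :
    sobolT π j g = cost π univ g - cost π (univ.erase j) g := by
  have h_telescope := sum_powerset_powersetMoebius_insert (cost π · g) (notMem_erase j univ)
  rwa [insert_erase (mem_univ j)] at h_telescope

lemma coordSubAlg_le (P : Finset (Fin p)) : coordSubAlg p P ≤ MeasurableSpace.pi :=
  Measurable.comap_le (measurable_pi_lambda _ fun _ ↦ measurable_pi_apply _)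

lemma coordSubAlg_empty : coordSubAlg p ∅ = ⊥ := by
  have h_const : (fun (x : UnitCube p) (i : (∅ : Finset (Fin p))) ↦ x i) = fun _ ↦ isEmptyElim :=
    Subsingleton.elim _ _
  rw [coordSubAlg, h_const, MeasurableSpace.comap_const]

lemma measurable_apply_coordSubAlg {P : Finset (Fin p)} {i : Fin p} (hi : i ∈ P) :
    Measurable[coordSubAlg p P] fun x : UnitCube p ↦ x i :=
  (measurable_pi_apply (⟨i, hi⟩ : {k // k ∈ P})).comp
    (comap_measurable fun (x : UnitCube p) (k : {k // k ∈ P}) ↦ x k)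

lemma coordSubAlg_univ : coordSubAlg p univ = MeasurableSpace.pi :=
  (coordSubAlg_le univ).antisymm
    (iSup_le fun i ↦ (measurable_apply_coordSubAlg (mem_univ i)).comap_le)

variable [IsProbabilityMeasure π]

lemma cost_eq_variance_condExp (hg : MemLp g 2 π) (P : Finset (Fin p)) :
    cost π P g = Var[π[g | coordSubAlg p P]; π] := by
  rcases eq_or_ne P ∅ with rfl | hP
  · rw [cost, if_pos rfl, coordSubAlg_empty, condExp_bot, variance_eq_sub (memLp_const _)]
    simp
  · rw [cost, if_neg hP, variance_eq_sub (hg.condExp one_le_two),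
      integral_condExp (coordSubAlg_le P)]
    rfl

lemma cost_univ_eq_variance (hg : MemLp g 2 π) : cost π univ g = Var[g; π] := by
  rw [cost_eq_variance_condExp hg, coordSubAlg_univ]
  exact variance_congr (condExp_of_aestronglyMeasurable' le_rfl hg.aestronglyMeasurable
    (hg.integrable one_le_two))

lemma sobolT_eq_integral_condVar (hg : MemLp g 2 π) (j : Fin p) :
    sobolT π j g = ∫ x, (Var[g; π | coordSubAlg p (univ.erase j)]) x ∂π := by
  rw [sobolT_eq_cost_sub_cost, cost_univ_eq_variance hg, cost_eq_variance_condExp hg,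
    ← integral_condVar_add_variance_condExp (coordSubAlg_le _) hg, add_sub_cancel_right]

end Sobol

lemma one_le_sum_choose_mul_two_pow_sub_one {p : ℕ} (hp : 0 < p) :
    1 ≤ ∑ i ∈ range p, ((p - 1).choose i : ℝ) * ((2 : ℝ) ^ (i + 1) - 1) := by
  have h_nonneg : ∀ i ∈ range p, 0 ≤ ((p - 1).choose i : ℝ) * ((2 : ℝ) ^ (i + 1) - 1) := fun i _ ↦
    mul_nonneg (Nat.cast_nonneg _) (sub_nonneg.2 (one_le_pow₀ one_le_two))
  calc (1 : ℝ) = ((p - 1).choose 0 : ℝ) * ((2 : ℝ) ^ (0 + 1) - 1) := by norm_num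
    _ ≤ _ := single_le_sum h_nonneg (mem_range.2 hp)

theorem stmt10_general {p : ℕ} (π : Measure (UnitCube p)) [IsProbabilityMeasure π] {C₀ : ℝ}
    {f f₀ : UnitCube p → ℝ} (hf : MemLp f 2 π) (hf₀ : MemLp f₀ 2 π)
    (hfC : √(∫ x, |f x| ^ 2 ∂π) ≤ C₀) (hf₀C : √(∫ x, |f₀ x| ^ 2 ∂π) ≤ C₀) (j : Fin p) :
    |sobolT π j f - sobolT π j f₀| ≤ 2 * C₀ * √(∫ x, |f x - f₀ x| ^ 2 ∂π) := by
  simp only [sq_abs] at hfC hf₀C ⊢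
  rw [← lpNorm_two_eq_sqrt_integral_sq hf.aestronglyMeasurable] at hfC
  rw [← lpNorm_two_eq_sqrt_integral_sq hf₀.aestronglyMeasurable] at hf₀C
  calc |sobolT π j f - sobolT π j f₀|
      ≤ (lpNorm f 2 π + lpNorm f₀ 2 π) * lpNorm (f - f₀) 2 π := by
        rw [sobolT_eq_integral_condVar hf, sobolT_eq_integral_condVar hf₀]
        exact abs_integral_condVar_sub_le (coordSubAlg_le _) hf hf₀
    _ ≤ 2 * C₀ * lpNorm (f - f₀) 2 π :=
        mul_le_mul_of_nonneg_right (by linarith) lpNorm_nonneg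
    _ = 2 * C₀ * √(∫ x, (f x - f₀ x) ^ 2 ∂π) := by
        rw [lpNorm_two_eq_sqrt_integral_sq (hf.sub hf₀).aestronglyMeasurable]
        rfl

/-- If `f, f₀ : [0,1]^p → ℝ` are measurable and bounded in supremum norm by
`C₀* > 0`, then for every `j ∈ [p]`,
`|T_{j,π}(f) - T_{j,π}(f₀)| ≤ 4C₀* (∑_{i=0}^{p-1} C(p-1,i)(2^{i+1} - 1)) ‖f - f₀‖_{L²(π)}`. -/
theorem stmt10 {p : ℕ} (π : Measure (UnitCube p)) [IsProbabilityMeasure π]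
    (C₀ : ℝ) (hC₀ : 0 < C₀)
    (f f₀ : UnitCube p → ℝ) (hf : Measurable f) (hf₀ : Measurable f₀)
    (hfb : ∀ x, |f x| ≤ C₀) (hf₀b : ∀ x, |f₀ x| ≤ C₀) :
    ∀ j : Fin p,
      |sobolT π j f - sobolT π j f₀| ≤
        4 * C₀ * (∑ i ∈ Finset.range p, ((p - 1).choose i : ℝ) * ((2 : ℝ) ^ (i + 1) - 1)) *
          Real.sqrt (∫ x, |f x - f₀ x| ^ 2 ∂π) := by
  intro j
  refine (stmt10_general π (.of_bound hf.aestronglyMeasurable C₀ (.of_forall hfb))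
    (.of_bound hf₀.aestronglyMeasurable C₀ (.of_forall hf₀b))
    (sqrt_integral_abs_sq_le hC₀.le hfb) (sqrt_integral_abs_sq_le hC₀.le hf₀b) j).trans
      (mul_le_mul_of_nonneg_right ?_ (Real.sqrt_nonneg _))
  nlinarith only [hC₀, one_le_sum_choose_mul_two_pow_sub_one j.pos]
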